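/- Let φ : ℂ → ℂ be holomorphic and injective on the right half-plane ℍ = {z ∈ ℂ : Re z > 0}. Then for every x > 1, every t ≥ 0, every κ ∈ (0,1) and every T ≥ 1 one has 2^{−t}·x^{−3t}·∫_{κT}^{T} |φ′(1 + iy)|^t dy ≤ ∫_{κT}^{T} |φ′(x + iy)|^t dy ≤ 8^t·x^{t}·∫_{κT}^{T} |φ′(1 + iy)|^t dy. -/

import Mathlib

open Complex intervalIntegral

open MeasureTheory Set in
lemma annulus_polar (H : ℂ → ℝ) (ρ r : ℝ) (h0 : 0 < ρ) (hr : ρ < r)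
    (hc : ContinuousOn H {z | ρ ≤ ‖z‖ ∧ ‖z‖ ≤ r}) :
    ∫ z in {z : ℂ | ρ < ‖z‖ ∧ ‖z‖ < r}, H z
      = ∫ s in ρ..r, s * ∫ θ in (0:ℝ)..(2 * Real.pi), H (circleMap 0 s θ) := by
  have hAm : MeasurableSet {z : ℂ | ρ < ‖z‖ ∧ ‖z‖ < r} :=
    (measurableSet_lt measurable_const measurable_norm).inter
      (measurableSet_lt measurable_norm measurable_const)
  have hsymm : ∀ p : ℝ × ℝ, Complex.polarCoord.symm p = circleMap 0 p.1 p.2 := by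
    intro p
    simp [Complex.polarCoord_symm_apply, circleMap, Complex.exp_mul_I]
  rw [← MeasureTheory.integral_indicator hAm, ← Complex.integral_comp_polarCoord_symm]
  have h1 : ∀ p ∈ polarCoord.target,
      p.1 • ({z : ℂ | ρ < ‖z‖ ∧ ‖z‖ < r}.indicator H (Complex.polarCoord.symm p))
       = (Ioo ρ r ×ˢ Ioo (-Real.pi) Real.pi).indicator
          (fun p : ℝ × ℝ => p.1 * H (circleMap 0 p.1 p.2)) p := by
    rintro ⟨s, θ⟩ hp
    rw [hsymm]
    have hs : 0 < s := hp.1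
    have hθ : θ ∈ Ioo (-Real.pi) Real.pi := hp.2
    simp only [indicator, mem_ofPred_eq, norm_circleMap_zero, abs_of_pos hs, mem_prod, hθ, and_true,
      mem_Ioo, smul_eq_mul]
    split_ifs <;> simp_all
  have hm : MeasurableSet (Ioo ρ r ×ˢ Ioo (-Real.pi) Real.pi) :=
    measurableSet_Ioo.prod measurableSet_Ioo
  rw [setIntegral_congr_fun polarCoord.open_target.measurableSet h1]
  rw [setIntegral_indicator hm]
  have h2 : polarCoord.target ∩ Ioo ρ r ×ˢ Ioo (-Real.pi) Real.pi
      = Ioo ρ r ×ˢ Ioo (-Real.pi) Real.pi := by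
    apply inter_eq_self_of_subset_right
    rintro ⟨s, θ⟩ ⟨hs, hθ⟩
    exact ⟨lt_trans h0 hs.1, hθ⟩
  rw [h2, Measure.volume_eq_prod, setIntegral_prod]
  · rw [intervalIntegral.integral_of_le hr.le, integral_Ioc_eq_integral_Ioo]
    apply setIntegral_congr_fun measurableSet_Ioo
    intro s hs
    simp only
    rw [MeasureTheory.integral_const_mul, ← integral_Ioc_eq_integral_Ioo,
      ← intervalIntegral.integral_of_le (by linarith [Real.pi_pos])]
    congr 1
    have hper : Function.Periodic (fun θ => H (circleMap 0 s θ)) (2 * Real.pi) := fun θ => by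
      simp [periodic_circleMap 0 s θ]
    have := hper.intervalIntegral_add_eq (-Real.pi) 0
    rw [zero_add] at this
    rw [← this]
    congr 1; ring
  · have : IntegrableOn (fun p : ℝ × ℝ => p.1 * H (circleMap 0 p.1 p.2))
        (Icc ρ r ×ˢ Icc (-Real.pi) Real.pi) := by
      apply ContinuousOn.integrableOn_compact (isCompact_Icc.prod isCompact_Icc)
      apply continuousOn_fst.mul
      apply hc.comp
      · unfold circleMap; fun_prop
      · rintro ⟨s, θ⟩ ⟨hs, hθ⟩
        have : 0 < s := lt_of_lt_of_le h0 hs.1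
        simpa [abs_of_pos this] using hs
    exact this.mono_set (prod_mono Ioo_subset_Icc_self Ioo_subset_Icc_self)

open MeasureTheory Set in
lemma annulus_lower (K : ℂ → ℂ) (hK : DifferentiableOn ℂ K (Metric.ball 0 1))
    (ρ r : ℝ) (h0 : 0 < ρ) (hr : ρ < r) (hr1 : r < 1) :
    Real.pi * (1 / ρ ^ 2 - 1 / r ^ 2) + Real.pi * ‖K 0‖ ^ 2 * (r ^ 2 - ρ ^ 2) ≤
    ∫ z in {z : ℂ | ρ < ‖z‖ ∧ ‖z‖ < r}, ‖-(z ^ 2)⁻¹ + K z‖ ^ 2 := by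
  have hAm : MeasurableSet {z : ℂ | ρ < ‖z‖ ∧ ‖z‖ < r} :=
    (measurableSet_lt measurable_const measurable_norm).inter
      (measurableSet_lt measurable_norm measurable_const)
  set b := K 0 with hb
  let H : ℂ → ℝ := fun z => (1 / ‖z‖ ^ 4 - ‖b‖ ^ 2) + 
    2 * (K z * ((starRingEnd ℂ) b - z ^ 2 / (‖z‖ ^ 4 : ℝ))).re
  have hann : {z : ℂ | ρ ≤ ‖z‖ ∧ ‖z‖ ≤ r} ⊆ Metric.ball 0 1 := fun z hz => by
    simpa using hz.2.trans_lt hr1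
  have hKc : ContinuousOn K {z | ρ ≤ ‖z‖ ∧ ‖z‖ ≤ r} := hK.continuousOn.mono hann
  have hne : ∀ z ∈ {z : ℂ | ρ ≤ ‖z‖ ∧ ‖z‖ ≤ r}, ‖z‖ ≠ 0 := fun z hz => 
    (lt_of_lt_of_le h0 hz.1).ne'
  have hHc : ContinuousOn H {z | ρ ≤ ‖z‖ ∧ ‖z‖ ≤ r} := by
    have h4 : ContinuousOn (fun z : ℂ => ‖z‖ ^ 4) {z | ρ ≤ ‖z‖ ∧ ‖z‖ ≤ r} := by fun_prop
    have h5 : ContinuousOn (fun z : ℂ => ((‖z‖ ^ 4 : ℝ) : ℂ)) {z | ρ ≤ ‖z‖ ∧ ‖z‖ ≤ r} := by fun_prop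
    refine ContinuousOn.add (ContinuousOn.sub (continuousOn_const.div h4 fun z hz => pow_ne_zero _ (hne z hz)) continuousOn_const) ?_
    refine continuousOn_const.mul (continuous_re.comp_continuousOn (hKc.mul (continuousOn_const.sub (ContinuousOn.div (by fun_prop) h5 fun z hz => ?_))))
    exact_mod_cast pow_ne_zero _ (hne z hz)
  have hcomp : IsCompact {z : ℂ | ρ ≤ ‖z‖ ∧ ‖z‖ ≤ r} := by
    apply (isCompact_closedBall (0:ℂ) r).of_isClosed_subset
    · exact (isClosed_le continuous_const continuous_norm).inter
        (isClosed_le continuous_norm continuous_const)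
    · intro z hz; simpa using hz.2
  have hsub : {z : ℂ | ρ < ‖z‖ ∧ ‖z‖ < r} ⊆ {z : ℂ | ρ ≤ ‖z‖ ∧ ‖z‖ ≤ r} :=
    fun z hz => ⟨hz.1.le, hz.2.le⟩
  have hle : ∫ z in {z : ℂ | ρ < ‖z‖ ∧ ‖z‖ < r}, H z ≤
      ∫ z in {z : ℂ | ρ < ‖z‖ ∧ ‖z‖ < r}, ‖-(z ^ 2)⁻¹ + K z‖ ^ 2 := by
    apply setIntegral_mono_on
    · exact (hHc.integrableOn_compact hcomp).mono_set hsub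
    · refine IntegrableOn.mono_set (ContinuousOn.integrableOn_compact hcomp ?_) hsub
      refine ((ContinuousOn.add (ContinuousOn.neg (ContinuousOn.inv₀ (by fun_prop) fun z hz => ?_)) hKc).norm).pow 2
      exact pow_ne_zero _ (norm_ne_zero_iff.1 (hne z hz))
    · exact hAm
    · intro z hz
      have hz0 : z ≠ 0 := norm_ne_zero_iff.1 (hne z (hsub hz))
      have e1 : (z ^ 2)⁻¹ = (starRingEnd ℂ) (z ^ 2 / (‖z‖ ^ 4 : ℝ)) := by
        rw [map_div₀, Complex.conj_ofReal, Complex.inv_def]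
        rw [div_eq_mul_inv, ← Complex.ofReal_inv, Complex.normSq_eq_norm_sq, norm_pow]
        ring_nf
      have e2 : 1 / ‖z‖ ^ 4 = ‖z ^ 2 / (‖z‖ ^ 4 : ℝ)‖ ^ 2 := by
        have : ‖z‖ ≠ 0 := norm_ne_zero_iff.2 hz0
        simp
        field_simp
      simp only [H]
      rw [e1, e2]
      generalize z ^ 2 / ((‖z‖ ^ 4 : ℝ) : ℂ) = w
      generalize K z = a
      rw [← Complex.normSq_eq_norm_sq, ← Complex.normSq_eq_norm_sq, ← Complex.normSq_eq_norm_sq,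
        Complex.normSq_apply, Complex.normSq_apply, Complex.normSq_apply]
      simp
      nlinarith [sq_nonneg (a.re - b.re), sq_nonneg (a.im - b.im)]
  refine le_trans (le_of_eq ?_) hle
  rw [annulus_polar H ρ r h0 hr hHc]
  have hin : ∀ s ∈ uIcc ρ r, (s * ∫ θ in (0:ℝ)..(2 * Real.pi), H (circleMap 0 s θ))
      = 2 * Real.pi * ((s ^ 3)⁻¹ + ‖b‖ ^ 2 * s) := by
    intro s hs
    rw [uIcc_of_le hr.le] at hs
    have hs0 : 0 < s := lt_of_lt_of_le h0 hs.1
    have hs1 : s < 1 := lt_of_le_of_lt hs.2 hr1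
    let G : ℂ → ℂ := fun z => K z * ((starRingEnd ℂ) b - z ^ 2 / (s ^ 4 : ℝ))
    have hG : DifferentiableOn ℂ G (Metric.ball 0 1) := by
      apply hK.mul; fun_prop
    have hGs : Real.circleAverage G 0 s = b * (starRingEnd ℂ) b := by
      rw [DiffContOnCl.circleAverage]
      · simp [G, hb]
      · rw [abs_of_pos hs0]
        apply DifferentiableOn.diffContOnCl
        apply hG.mono
        rw [closure_ball _ hs0.ne']
        exact Metric.closedBall_subset_ball hs1
    have hGci : CircleIntegrable G 0 s := by
      apply ContinuousOn.circleIntegrable hs0.le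
      apply hG.continuousOn.mono
      exact Metric.sphere_subset_closedBall.trans (Metric.closedBall_subset_ball hs1)
    have hre := Complex.reCLM.circleAverage_comp_comm hGci
    rw [hGs, Real.circleAverage_def] at hre
    simp only [smul_eq_mul] at hre
    have hci : IntervalIntegrable (fun θ => (G (circleMap 0 s θ)).re) volume 0 (2 * Real.pi) := 
      ⟨MeasureTheory.Integrable.re hGci.1, MeasureTheory.Integrable.re hGci.2⟩
    have hHH : ∀ θ, H (circleMap 0 s θ) = (1 / s ^ 4 - ‖b‖ ^ 2) + 2 * (G (circleMap 0 s θ)).re := by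
      intro θ
      simp [H, G, abs_of_pos hs0]
    simp_rw [hHH]
    rw [intervalIntegral.integral_add (by simp) (hci.const_mul 2), intervalIntegral.integral_const,
      intervalIntegral.integral_const_mul]
    have hre2 : (∫ θ in (0:ℝ)..(2 * Real.pi), (G (circleMap 0 s θ)).re) = 2 * Real.pi * ‖b‖ ^ 2 := by
      rw [Complex.mul_conj, Complex.normSq_eq_norm_sq] at hre
      have hpi := Real.pi_pos
      simp at hre
      field_simp at hre
      norm_cast at hre
      rw [mul_comm 2 Real.pi]; exact hre
    rw [hre2]
    simp
    field_simp
    ring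
  rw [intervalIntegral.integral_congr hin]
  have hder : ∀ s ∈ uIcc ρ r, HasDerivAt (fun s : ℝ => Real.pi * (-(s ^ 2)⁻¹ + ‖b‖ ^ 2 * s ^ 2))
      (2 * Real.pi * ((s ^ 3)⁻¹ + ‖b‖ ^ 2 * s)) s := by
    intro s hs
    rw [uIcc_of_le hr.le] at hs
    have hs0 : 0 < s := lt_of_lt_of_le h0 hs.1
    have := (((hasDerivAt_pow 2 s).inv (pow_ne_zero 2 hs0.ne')).neg.add ((hasDerivAt_pow 2 s).const_mul (‖b‖ ^ 2))).const_mul Real.pi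
    refine this.congr_deriv ?_
    simp
    field_simp
  rw [intervalIntegral.integral_eq_sub_of_hasDerivAt hder]
  · ring
  · apply ContinuousOn.intervalIntegrable
    apply continuousOn_const.mul
    apply ContinuousOn.add _ (by fun_prop)
    apply ContinuousOn.inv₀ (by fun_prop)
    intro s hs
    rw [uIcc_of_le hr.le] at hs
    exact pow_ne_zero _ (lt_of_lt_of_le h0 hs.1).ne'

lemma det_real_complex (f : ℂ →ₗ[ℝ] ℂ) :
    LinearMap.det f = (f 1).re * (f I).im - (f I).re * (f 1).im := by
  rw [← LinearMap.det_toMatrix Complex.basisOneI, Matrix.det_fin_two]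
  simp [LinearMap.toMatrix_apply]

lemma ellipse_contain (z k b : ℂ) (ρ C : ℝ) (h0 : 0 < ρ) (h1 : ρ < ‖z‖) (hz1 : ‖z‖ < 1)
    (hC : 0 ≤ C) (hsmall : 6 * (‖b‖ + C) * ρ ≤ 1) (hk : ‖k - b * z‖ ≤ C * ‖z‖ ^ 2) :
    ‖(z⁻¹ + k) - b * ρ ^ 2 * (starRingEnd ℂ) (z⁻¹ + k)‖
      ≤ 1 / ρ + (8 * C + 2 * ‖b‖ ^ 2) * ρ ^ 2 := by
  set B := ‖b‖ with hB
  have hB0 : 0 ≤ B := norm_nonneg _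
  set s := ‖z‖ with hs
  have hs0 : 0 < s := h0.trans h1
  have hρ1 : ρ < 1 := h1.trans hz1
  have hBρ : B * ρ ≤ 1 / 6 := by nlinarith [mul_nonneg hC h0.le]
  have hBρ2 : B * ρ ^ 2 ≤ 1 / 6 := by nlinarith [mul_nonneg hB0 h0.le]
  have hz0 : z ≠ 0 := norm_pos_iff.1 hs0
  have hnb : ‖b * (ρ:ℂ) ^ 2‖ = B * ρ ^ 2 := by simp [hB]
  rcases le_total s (2 * ρ) with h | h
  · set e := k - b * z with he
    have hke : k = b * z + e := by simp [he]
    have hid : (z⁻¹ + k) - b * ρ ^ 2 * (starRingEnd ℂ) (z⁻¹ + k)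
        = z⁻¹ + b * z * (1 - ρ ^ 2 / s ^ 2 : ℝ)  - b * (ρ:ℂ) ^ 2 * (starRingEnd ℂ) (b * z)
          + (e - b * (ρ:ℂ) ^ 2 * (starRingEnd ℂ) e) := by
      have hc0 : (starRingEnd ℂ) z ≠ 0 := by simpa using hz0
      have : z * (ρ ^ 2 / s ^ 2 : ℝ) = (ρ : ℂ) ^ 2 * ((starRingEnd ℂ) z)⁻¹ := by
        push_cast
        rw [hs, ← Complex.mul_conj']
        field_simp
      rw [hke]
      simp only [map_add, map_inv₀]
      push_cast at this ⊢
      linear_combination b * this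
    rw [hid]
    have n1 : ‖z⁻¹‖ = 1 / s := by simp [hs]
    have hfac : 0 ≤ 1 - ρ ^ 2 / s ^ 2 := by
      rw [sub_nonneg, div_le_one (by positivity)]
      gcongr
    have n2 : ‖b * z * (1 - ρ ^ 2 / s ^ 2 : ℝ)‖ = B * s * (1 - ρ ^ 2 / s ^ 2) := by
      rw [norm_mul, norm_mul, Complex.norm_real, Real.norm_of_nonneg hfac]
    have n3 : ‖b * (ρ:ℂ) ^ 2 * (starRingEnd ℂ) (b * z)‖ = B ^ 2 * ρ ^ 2 * s := by
      rw [norm_mul, hnb, RCLike.norm_conj, norm_mul]; ring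
    have n4 : ‖e - b * (ρ:ℂ) ^ 2 * (starRingEnd ℂ) e‖ ≤ 2 * (C * s ^ 2) := by
      refine (norm_sub_le _ _).trans ?_
      rw [norm_mul, hnb, RCLike.norm_conj]
      nlinarith [norm_nonneg e]
    have key : 1 / s + B * s * (1 - ρ ^ 2 / s ^ 2) ≤ 1 / ρ := by
      have : 1 / ρ - (1 / s + B * s * (1 - ρ ^ 2 / s ^ 2))
          = (s - ρ) / (s * ρ) * (1 - B * ρ * (s + ρ)) := by
        field_simp
        ring
      have h3 : 0 ≤ 1 - B * ρ * (s + ρ) := by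
        nlinarith [mul_nonneg hB0 h0.le]
      have : 0 ≤ (s - ρ) / (s * ρ) * (1 - B * ρ * (s + ρ)) := 
        mul_nonneg (div_nonneg (by linarith) (by positivity)) h3
      linarith
    have h5 : B ^ 2 * ρ ^ 2 * s ≤ 2 * B ^ 2 * ρ ^ 2 := by
      have : 0 ≤ B ^ 2 * ρ ^ 2 := by positivity
      nlinarith
    have h6 : s ^ 2 ≤ 4 * ρ ^ 2 := by nlinarith
    have h7 : C * s ^ 2 ≤ C * (4 * ρ ^ 2) := by gcongr
    calc _ ≤ ‖z⁻¹‖ + ‖b * z * (1 - ρ ^ 2 / s ^ 2 : ℝ)‖ + ‖b * (ρ:ℂ) ^ 2 * (starRingEnd ℂ) (b * z)‖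
          + ‖e - b * (ρ:ℂ) ^ 2 * (starRingEnd ℂ) e‖ := by
            refine (norm_add_le _ _).trans ?_
            gcongr
            refine (norm_sub_le _ _).trans ?_
            gcongr
            exact norm_add_le _ _
      _ ≤ _ := by rw [n1, n2, n3]; linarith
  · have hw : ‖z⁻¹ + k‖ ≤ 1 / (2 * ρ) + B + C := by
      have : k = b * z + (k - b * z) := by ring
      rw [this]
      have q1 : ‖z⁻¹‖ ≤ 1 / (2 * ρ) := by
        rw [norm_inv, ← one_div]
        gcongr
      have q2 : ‖b * z‖ ≤ B := by
        rw [norm_mul]; nlinarith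
      have q3 : ‖k - b * z‖ ≤ C := hk.trans (by nlinarith [sq_nonneg s, mul_nonneg hC hs0.le])
      calc _ ≤ ‖z⁻¹‖ + (‖b * z‖ + ‖k - b * z‖) := (norm_add_le _ _).trans (by gcongr; exact norm_add_le _ _)
        _ ≤ _ := by linarith
    have h8 : B + C ≤ 1 / 6 * (1 / ρ) := by
      rw [mul_one_div, le_div_iff₀ h0]; linarith
    have h9 : 1 / (2 * ρ) = 1 / 2 * (1 / ρ) := by field_simp
    have h10 : 0 < 1 / ρ := by positivity
    have h11 : 0 ≤ (8 * C + 2 * B ^ 2) * ρ ^ 2 := by positivity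
    refine (norm_sub_le _ _).trans ?_
    rw [norm_mul, hnb, RCLike.norm_conj]
    nlinarith [norm_nonneg (z⁻¹ + k)]

open MeasureTheory Set in
lemma area_upper (k : ℂ → ℂ) (hk : DifferentiableOn ℂ k (Metric.ball 0 1))
    (hinj : InjOn (fun z => z⁻¹ + k z) (Metric.ball 0 1 \ {0}))
    (b : ℂ) (ρ r C : ℝ) (h0 : 0 < ρ) (hr1 : r < 1) (hρ1 : ρ < 1)
    (hC : 0 ≤ C) (hsmall : 6 * (‖b‖ + C) * ρ ≤ 1) 
    (hkC : ∀ z, ‖z‖ < r → ‖k z - b * z‖ ≤ C * ‖z‖ ^ 2) :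
    (∫ z in {z : ℂ | ρ < ‖z‖ ∧ ‖z‖ < r}, ‖-(z ^ 2)⁻¹ + deriv k z‖ ^ 2) * (1 - ‖b‖ ^ 2 * ρ ^ 4)
      ≤ Real.pi * (1 / ρ + (8 * C + 2 * ‖b‖ ^ 2) * ρ ^ 2) ^ 2 := by
  set A := {z : ℂ | ρ < ‖z‖ ∧ ‖z‖ < r} with hA
  have hAm : MeasurableSet A :=
    (measurableSet_lt measurable_const measurable_norm).inter
      (measurableSet_lt measurable_norm measurable_const)
  have hAsub : A ⊆ Metric.ball 0 1 \ {0} := by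
    intro z hz
    refine ⟨by simpa using hz.2.trans hr1, ?_⟩
    have : 0 < ‖z‖ := h0.trans hz.1
    simpa using this
  set g : ℂ → ℂ := fun z => z⁻¹ + k z with hg
  set R := 1 / ρ + (8 * C + 2 * ‖b‖ ^ 2) * ρ ^ 2 with hR
  have hR0 : 0 ≤ R := by positivity
  have hder : ∀ z ∈ A, HasDerivAt g (-(z ^ 2)⁻¹ + deriv k z) z := by
    intro z hz
    have h2 := hAsub hz
    exact (hasDerivAt_inv h2.2).add
      (hk.differentiableAt (Metric.isOpen_ball.mem_nhds h2.1)).hasDerivAt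
  let f' : ℂ → ℂ →L[ℝ] ℂ := fun z =>
    (ContinuousLinearMap.toSpanSingleton ℂ (-(z ^ 2)⁻¹ + deriv k z)).restrictScalars ℝ
  have hf' : ∀ z ∈ A, HasFDerivWithinAt g (f' z) A z := fun z hz =>
    ((hder z hz).hasFDerivAt.restrictScalars ℝ).hasFDerivWithinAt
  have hdet : ∀ z, |(f' z).det| = ‖-(z ^ 2)⁻¹ + deriv k z‖ ^ 2 := by
    intro z
    have : (f' z).det = ‖-(z ^ 2)⁻¹ + deriv k z‖ ^ 2 := by
      rw [ContinuousLinearMap.det, det_real_complex, ← Complex.normSq_eq_norm_sq, Complex.normSq_apply]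
      simp only [f', ContinuousLinearMap.coe_coe, ContinuousLinearMap.coe_restrictScalars',
        ContinuousLinearMap.toSpanSingleton_apply, smul_eq_mul, one_mul, Complex.mul_re, Complex.mul_im, I_re, I_im]
      ring
    rw [this, abs_of_nonneg (by positivity)]
  have hint := integral_image_eq_integral_abs_det_fderiv_smul volume hAm hf' (hinj.mono hAsub)
    (fun _ => (1:ℝ))
  simp only [hdet, smul_eq_mul, mul_one] at hint
  rw [← hint]
  let M : ℂ →ₗ[ℝ] ℂ := LinearMap.id - (LinearMap.mulLeft ℝ (b * (ρ:ℂ) ^ 2)) ∘ₗ conjAe.toLinearMap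
  have hM : ∀ w, M w = w - b * (ρ:ℂ) ^ 2 * (starRingEnd ℂ) w := by
    intro w; simp [M, mul_assoc]
  have hMdet : LinearMap.det M = 1 - ‖b‖ ^ 2 * ρ ^ 4 := by
    rw [det_real_complex, hM, hM, ← Complex.normSq_eq_norm_sq, Complex.normSq_apply]
    simp [← Complex.ofReal_pow]
    ring
  have hBρ : ‖b‖ * ρ ≤ 1 / 6 := by nlinarith [mul_nonneg hC h0.le]
  have hB0 : 0 ≤ ‖b‖ * ρ := by positivity
  have hpos : 0 < 1 - ‖b‖ ^ 2 * ρ ^ 4 := by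
    have h1 : ‖b‖ ^ 2 * ρ ^ 4 = (‖b‖ * ρ) ^ 2 * ρ ^ 2 := by ring
    have h2 : (‖b‖ * ρ) ^ 2 ≤ 1 / 36 := by nlinarith
    have h3 : ρ ^ 2 ≤ 1 := by nlinarith
    nlinarith [sq_nonneg (‖b‖ * ρ), sq_nonneg ρ]
  have hsub : g '' A ⊆ M ⁻¹' Metric.closedBall 0 R := by
    rintro _ ⟨z, hz, rfl⟩
    simp only [mem_preimage, hM, mem_closedBall_zero_iff]
    exact ellipse_contain z (k z) b ρ C h0 hz.1 (hz.2.trans hr1) hC hsmall (hkC z hz.2)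
  have hvol : volume (M ⁻¹' Metric.closedBall 0 R) = ENNReal.ofReal ((1 - ‖b‖ ^ 2 * ρ ^ 4)⁻¹ * (R ^ 2 * Real.pi)) := by
    rw [Measure.addHaar_preimage_linearMap _ (by rw [hMdet]; exact hpos.ne'), hMdet, Complex.volume_closedBall,
      abs_of_pos (inv_pos.2 hpos), ENNReal.ofReal_mul (inv_pos.2 hpos).le, ENNReal.ofReal_mul (by positivity),
      ENNReal.ofReal_pow hR0]
    congr 2
    rw [ENNReal.ofReal, ← NNReal.coe_real_pi, Real.toNNReal_coe]
  have hle : volume.real (g '' A) ≤ (1 - ‖b‖ ^ 2 * ρ ^ 4)⁻¹ * (R ^ 2 * Real.pi) := by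
    refine ENNReal.toReal_le_of_le_ofReal (by positivity) ?_
    rw [← hvol]
    exact measure_mono hsub
  have : (∫ x in g '' A, (1:ℝ)) = volume.real (g '' A) := by simp
  rw [this]
  calc _ ≤ ((1 - ‖b‖ ^ 2 * ρ ^ 4)⁻¹ * (R ^ 2 * Real.pi)) * (1 - ‖b‖ ^ 2 * ρ ^ 4) := by gcongr
    _ = _ := by field_simp

open MeasureTheory Set Filter Topology in
lemma area_theorem (k : ℂ → ℂ) (hk : DifferentiableOn ℂ k (Metric.ball 0 1)) (hk0 : k 0 = 0)
    (hinj : InjOn (fun z => z⁻¹ + k z) (Metric.ball 0 1 \ {0})) : ‖deriv k 0‖ ≤ 1 := by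
  set b := deriv k 0 with hb
  have hmain : ∀ r : ℝ, 0 < r → r < 1 → ‖b‖ ^ 2 * r ^ 4 ≤ 1 := by
    intro r hr hr1
    have hnb : Metric.ball (0:ℂ) 1 ∈ 𝓝 0 := Metric.ball_mem_nhds _ one_pos
    have hm : DifferentiableOn ℂ (dslope k 0) (Metric.ball 0 1) :=
      (differentiableOn_dslope hnb).2 hk
    have hn : DifferentiableOn ℂ (dslope (dslope k 0) 0) (Metric.ball 0 1) :=
      (differentiableOn_dslope hnb).2 hm
    obtain ⟨C, hC⟩ := (isCompact_closedBall (0:ℂ) r).exists_bound_of_continuousOn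
      (hn.continuousOn.mono (Metric.closedBall_subset_ball hr1))
    have hC0 : 0 ≤ C := (norm_nonneg _).trans (hC 0 (by simp [hr.le]))
    have hkC : ∀ z, ‖z‖ < r → ‖k z - b * z‖ ≤ C * ‖z‖ ^ 2 := by
      intro z hz
      have e1 : k z = z * dslope k 0 z := by
        have := sub_smul_dslope k 0 z
        simpa [hk0] using this.symm
      have e2 : dslope k 0 z - b = z * dslope (dslope k 0) 0 z := by
        have := sub_smul_dslope (dslope k 0) 0 z
        simpa [hb] using this.symm
      have e3 : k z - b * z = dslope (dslope k 0) 0 z * z ^ 2 := by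
        rw [e1]; linear_combination z * e2
      rw [e3, norm_mul, norm_pow]
      gcongr
      exact hC z (by simpa using hz.le)
    set D := 8 * C + 2 * ‖b‖ ^ 2 with hD
    have hineq : ∀ᶠ ρ : ℝ in 𝓝[>] 0, (- 1 / r ^ 2 + ‖b‖ ^ 2 * (r ^ 2 - ρ ^ 2)) * (1 - ‖b‖ ^ 2 * ρ ^ 4)
        - ‖b‖ ^ 2 * ρ ^ 2 ≤ 2 * D * ρ + D ^ 2 * ρ ^ 4 := by
      have hc : Tendsto (fun ρ : ℝ => 6 * (‖b‖ + C) * ρ) (𝓝[>] 0) (𝓝 0) := by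
        have : Tendsto (fun ρ : ℝ => 6 * (‖b‖ + C) * ρ) (𝓝 0) (𝓝 (6 * (‖b‖ + C) * 0)) :=
          Continuous.tendsto (by fun_prop) 0
        rw [mul_zero] at this
        exact this.mono_left nhdsWithin_le_nhds
      filter_upwards [hc.eventually (ge_mem_nhds one_pos), self_mem_nhdsWithin,
        nhdsWithin_le_nhds (gt_mem_nhds hr)] with ρ h1 h2 h3
      have h2 : 0 < ρ := h2
      have lo := annulus_lower (deriv k) (hk.deriv Metric.isOpen_ball) ρ r h2 h3 hr1
      have up := area_upper k hk hinj b ρ r C h2 hr1 (h3.trans hr1) hC0 h1 hkC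
      have hBρ : ‖b‖ * ρ ≤ 1 / 6 := by nlinarith [mul_nonneg hC0 h2.le]
      have hB0 : 0 ≤ ‖b‖ * ρ := by positivity
      have hpos : 0 ≤ 1 - ‖b‖ ^ 2 * ρ ^ 4 := by
        have h1 : ‖b‖ ^ 2 * ρ ^ 4 = (‖b‖ * ρ) ^ 2 * ρ ^ 2 := by ring
        have h2 : (‖b‖ * ρ) ^ 2 ≤ 1 / 36 := by nlinarith
        have h3 : ρ ^ 2 ≤ 1 := by nlinarith
        nlinarith [sq_nonneg (‖b‖ * ρ), sq_nonneg ρ]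
      have h5 := (mul_le_mul_of_nonneg_right lo hpos).trans up
      have h6 : Real.pi * ((1 / ρ ^ 2 - 1 / r ^ 2 + ‖b‖ ^ 2 * (r ^ 2 - ρ ^ 2)) * (1 - ‖b‖ ^ 2 * ρ ^ 4))
          ≤ Real.pi * (1 / ρ + D * ρ ^ 2) ^ 2 := by
        rw [← hb] at h5
        refine le_trans (le_of_eq ?_) h5
        ring
      have h7 := le_of_mul_le_mul_left h6 Real.pi_pos
      have e1 : (1 / ρ + D * ρ ^ 2) ^ 2 = 1 / ρ ^ 2 + 2 * D * ρ + D ^ 2 * ρ ^ 4 := by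
        field_simp
        ring
      have e2 : (1 / ρ ^ 2 - 1 / r ^ 2 + ‖b‖ ^ 2 * (r ^ 2 - ρ ^ 2)) * (1 - ‖b‖ ^ 2 * ρ ^ 4)
          = 1 / ρ ^ 2 + ((- 1 / r ^ 2 + ‖b‖ ^ 2 * (r ^ 2 - ρ ^ 2)) * (1 - ‖b‖ ^ 2 * ρ ^ 4)
        - ‖b‖ ^ 2 * ρ ^ 2) := by
        field_simp
        ring
      linarith
    have l1 : Tendsto (fun ρ : ℝ => (- 1 / r ^ 2 + ‖b‖ ^ 2 * (r ^ 2 - ρ ^ 2)) * (1 - ‖b‖ ^ 2 * ρ ^ 4)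
        - ‖b‖ ^ 2 * ρ ^ 2) (𝓝[>] 0) (𝓝 (- 1 / r ^ 2 + ‖b‖ ^ 2 * r ^ 2)) := by
      refine (Continuous.tendsto' (by fun_prop) 0 _ (by simp)).mono_left nhdsWithin_le_nhds
    have l2 : Tendsto (fun ρ : ℝ => 2 * D * ρ + D ^ 2 * ρ ^ 4) (𝓝[>] 0) (𝓝 0) := by
      refine (Continuous.tendsto' (by fun_prop) 0 _ (by simp)).mono_left nhdsWithin_le_nhds
    have := le_of_tendsto_of_tendsto l1 l2 hineq
    have h8 : ‖b‖ ^ 2 * r ^ 2 ≤ 1 / r ^ 2 := by rw [neg_div] at this; linarith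
    rw [le_div_iff₀ (by positivity)] at h8
    linarith
  have l : Tendsto (fun r : ℝ => ‖b‖ ^ 2 * r ^ 4) (𝓝[<] 1) (𝓝 (‖b‖ ^ 2)) :=
    (Continuous.tendsto' (by fun_prop) 1 _ (by simp)).mono_left nhdsWithin_le_nhds
  have : ‖b‖ ^ 2 ≤ 1 := by
    refine le_of_tendsto l ?_
    filter_upwards [self_mem_nhdsWithin, nhdsWithin_le_nhds (lt_mem_nhds one_pos)] with r h1 h2
    exact hmain r h2 h1
  exact (sq_le_one_iff₀ (norm_nonneg _)).1 this

lemma le_of_sq_le_sq_aux {a b : ℝ} (hb : 0 ≤ b) (h : a ^ 2 ≤ b ^ 2) : a ≤ b :=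
  abs_le_of_sq_le_sq' h hb |>.2

open Set Filter Topology in
lemma bieberbach (f : ℂ → ℂ) (hf : DifferentiableOn ℂ f (Metric.ball 0 1))
    (hinj : InjOn f (Metric.ball 0 1)) (ha : deriv f 0 ≠ 0) :
    ‖deriv (deriv f) 0‖ ≤ 4 * ‖deriv f 0‖ := by
  set U := Metric.ball (0:ℂ) 1 with hU
  have hUo : IsOpen U := Metric.isOpen_ball
  have h0U : (0:ℂ) ∈ U := by simp [hU]
  have hnb : U ∈ 𝓝 (0:ℂ) := hUo.mem_nhds h0U
  set a := deriv f 0 with hadef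
  set p := dslope f 0 with hp
  have hpd : DifferentiableOn ℂ p U := (differentiableOn_dslope hnb).2 hf
  have hfp : ∀ z, f z - f 0 = z * p z := by
    intro z
    have := sub_smul_dslope f 0 z
    simpa using this.symm
  have hp0 : p 0 = a := by simp [hp, hadef]
  have hpne : ∀ z ∈ U, p z ≠ 0 := by
    intro z hz h
    by_cases hz0 : z = 0
    · rw [hz0, hp0] at h; exact ha h
    · have := hfp z
      rw [h, mul_zero, sub_eq_zero] at this
      exact hz0 (hinj hz h0U this)
  have hpat : ∀ z ∈ U, HasDerivAt p (deriv p z) z := fun z hz =>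
    (hpd.differentiableAt (hUo.mem_nhds hz)).hasDerivAt
  have hdp : DifferentiableOn ℂ (deriv p) U := hpd.deriv hUo
  obtain ⟨L, hL0, hL⟩ := ((hdp.div hpd hpne).isExactOn_ball).with_val_at 0 0
  have hexp : ∀ z ∈ U, p z * Complex.exp (-L z) = a := by
    intro z hz
    have hder : ∀ w ∈ U, HasDerivAt (fun w => p w * Complex.exp (-L w)) 0 w := by
      intro w hw
      refine ((hpat w hw).mul ((hL w hw).neg.cexp)).congr_deriv ?_
      have := hpne w hw
      simp only [Pi.div_apply]
      field_simp
      ring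
    have := hUo.is_const_of_deriv_eq_zero (convex_ball (0:ℂ) 1).isPreconnected
      (fun w hw => (hder w hw).differentiableAt.differentiableWithinAt)
      (fun w hw => (hder w hw).deriv) hz h0U
    rw [this, hL0, hp0]; simp
  set Q : ℂ → ℂ := fun z => Complex.exp (-L z / 2) with hQ
  have hQ2 : ∀ z ∈ U, Q z ^ 2 * p z = a := by
    intro z hz
    rw [← hexp z hz, hQ, ← Complex.exp_nat_mul]
    push_cast
    rw [mul_div_cancel₀ _ two_ne_zero, mul_comm]
  have hQd : ∀ z ∈ U, HasDerivAt Q (Complex.exp (-L z / 2) * (-(deriv p z / p z) / 2)) z :=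
    fun z hz => ((hL z hz).neg.div_const 2).cexp
  have hQ0 : Q 0 = 1 := by simp [hQ, hL0]
  have hQ'0 : deriv Q 0 = -(deriv p 0 / a) / 2 := by
    rw [(hQd 0 h0U).deriv, hL0, hp0]; simp
  have hQdiff : DifferentiableOn ℂ Q U := fun z hz => (hQd z hz).differentiableAt.differentiableWithinAt
  set m := dslope Q 0 with hm
  have hmd : DifferentiableOn ℂ m U := (differentiableOn_dslope hnb).2 hQdiff
  have hQm : ∀ z, Q z = 1 + z * m z := by
    intro z
    have := sub_smul_dslope Q 0 z
    rw [hQ0] at this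
    simp only [sub_zero, smul_eq_mul] at this
    rw [hm, this]; ring
  have hsq : ∀ z ∈ U, z ^ 2 ∈ U := by
    intro z hz
    simp only [hU, mem_ball_zero_iff, norm_pow] at hz ⊢
    exact pow_lt_one₀ (norm_nonneg _) hz two_ne_zero
  set k : ℂ → ℂ := fun z => z * m (z ^ 2) with hk
  have hmsq : DifferentiableOn ℂ (fun z => m (z ^ 2)) U := hmd.comp (by fun_prop) hsq
  have hkd : DifferentiableOn ℂ k U := differentiableOn_id.mul hmsq
  have hk' : deriv k 0 = -(deriv p 0 / a) / 2 := by
    have h1 : HasDerivAt (fun z => m (z ^ 2)) (deriv (fun z => m (z ^ 2)) 0) 0 :=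
      (hmsq.differentiableAt hnb).hasDerivAt
    have := (hasDerivAt_id (0:ℂ)).mul h1
    have h2 : deriv k 0 = _ := this.deriv
    rw [h2, ← hQ'0]; simp [hm]
  have hg : ∀ z, z ≠ 0 → z⁻¹ + k z = Q (z ^ 2) / z := by
    intro z hz
    rw [hQm]; simp only [hk]; field_simp
  have hkinj : InjOn (fun z => z⁻¹ + k z) (U \ {0}) := by
    rintro z ⟨hz, hz0⟩ w ⟨hw, hw0⟩ h
    have hz0 : z ≠ 0 := hz0
    have hw0 : w ≠ 0 := hw0
    simp only [hg z hz0, hg w hw0] at h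
    have hz2 := hQ2 _ (hsq z hz)
    have hw2 := hQ2 _ (hsq w hw)
    have hQz : Q (z ^ 2) ≠ 0 := Complex.exp_ne_zero _
    have hQw : Q (w ^ 2) ≠ 0 := Complex.exp_ne_zero _
    have h1 : Q (z ^ 2) * w = Q (w ^ 2) * z := by
      field_simp at h; linear_combination h
    have h2 : Q (z ^ 2) ^ 2 * w ^ 2 = Q (w ^ 2) ^ 2 * z ^ 2 := by
      linear_combination (Q (z ^ 2) * w + Q (w ^ 2) * z) * h1
    have h3 : f (z ^ 2) = f (w ^ 2) := by
      have : z ^ 2 * p (z ^ 2) = w ^ 2 * p (w ^ 2) := by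
        have hc : Q (z ^ 2) ^ 2 * Q (w ^ 2) ^ 2 ≠ 0 := by positivity
        apply mul_left_cancel₀ hc
        linear_combination (Q (w ^ 2) ^ 2 * z ^ 2) * hz2 - (Q (z ^ 2) ^ 2 * w ^ 2) * hw2 - a * h2
      rw [← hfp, ← hfp] at this
      linear_combination this
    have h4 := hinj (hsq z hz) (hsq w hw) h3
    rw [h4] at h1
    exact (mul_left_cancel₀ hQw h1).symm
  have hA := area_theorem k hkd (by simp [hk]) hkinj
  rw [hk', norm_div, norm_neg, norm_div] at hA
  have hf2 : deriv (deriv f) 0 = 2 * deriv p 0 := by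
    have hev : deriv f =ᶠ[𝓝 0] fun z => p z + z * deriv p z := by
      filter_upwards [hnb] with z hz
      have h1 : HasDerivAt (fun z => f 0 + z * p z) (1 * p z + z * deriv p z) z :=
        ((hasDerivAt_id z).mul (hpat z hz)).const_add (f 0)
      have h2 : f = fun z => f 0 + z * p z := by
        funext z; rw [← hfp]; ring
      rw [h2, h1.deriv, one_mul]
    rw [hev.deriv_eq]
    have h1 := (hpat 0 h0U).add ((hasDerivAt_id (0:ℂ)).mul
      (hdp.differentiableAt hnb).hasDerivAt)
    have h2 : deriv (fun z => p z + z * deriv p z) 0 = _ := h1.deriv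
    rw [h2]; simp; ring
  have hapos : 0 < ‖a‖ := norm_pos_iff.2 ha
  rw [hf2, norm_mul]
  rw [div_le_one (by simp), div_le_iff₀ hapos] at hA
  simp at hA ⊢
  linarith

open Set Filter Topology in
lemma halfplane_ne (φ : ℂ → ℂ) (hdiff : DifferentiableOn ℂ φ {z : ℂ | 0 < z.re})
    (hinj : InjOn φ {z : ℂ | 0 < z.re}) (z : ℂ) (hz : 0 < z.re) (hne : deriv φ z ≠ 0) :
    ‖z.re * deriv (deriv φ) z + deriv φ z‖ ≤ 2 * ‖deriv φ z‖ := by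
  have hHo : IsOpen {z : ℂ | 0 < z.re} := isOpen_lt continuous_const continuous_re
  set x := z.re with hx
  have hxc : (x:ℂ) ≠ 0 := by exact_mod_cast hz.ne'
  let ψ : ℂ → ℂ := fun w => z - 2 * x + 2 * x * (1 - w)⁻¹
  have hw1 : ∀ w ∈ Metric.ball (0:ℂ) 1, 1 - w ≠ 0 := by
    intro w hw h
    rw [sub_eq_zero] at h
    simp [← h] at hw
  have hψH : ∀ w ∈ Metric.ball (0:ℂ) 1, ψ w ∈ {z : ℂ | 0 < z.re} := by
    intro w hw
    have hn : 0 < Complex.normSq (1 - w) := Complex.normSq_pos.2 (hw1 w hw)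
    have hw' : Complex.normSq w < 1 := by
      rw [Complex.normSq_eq_norm_sq]
      exact pow_lt_one₀ (norm_nonneg _) (by simpa using hw) two_ne_zero
    have h2 : 1 / 2 < ((1 - w)⁻¹).re := by
      rw [Complex.inv_re, lt_div_iff₀ hn]
      rw [Complex.normSq_apply] at *
      simp at *
      nlinarith
    have : (ψ w).re = x - 2 * x + 2 * x * ((1 - w)⁻¹).re := by
      have : ψ w = z - ((2 * x : ℝ) : ℂ) + ((2 * x : ℝ) : ℂ) * (1 - w)⁻¹ := by simp [ψ]
      rw [this, Complex.add_re, Complex.sub_re, Complex.re_ofReal_mul, Complex.ofReal_re]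
    show 0 < (ψ w).re
    rw [this]
    nlinarith
  have hψd : ∀ w ∈ Metric.ball (0:ℂ) 1, HasDerivAt ψ (2 * x * ((1 - w) ^ 2)⁻¹) w := by
    intro w hw
    have := ((((hasDerivAt_id w).const_sub 1).inv (hw1 w hw)).const_mul (2 * (x:ℂ))).const_add (z - 2 * x)
    refine this.congr_deriv ?_
    simp [div_eq_mul_inv]
  have h0 : (0:ℂ) ∈ Metric.ball (0:ℂ) 1 := by simp
  have hψ0 : ψ 0 = z := by simp [ψ]
  have hfd : ∀ w ∈ Metric.ball (0:ℂ) 1,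
      HasDerivAt (φ ∘ ψ) (deriv φ (ψ w) * (2 * x * ((1 - w) ^ 2)⁻¹)) w := fun w hw =>
    (hdiff.differentiableAt (hHo.mem_nhds (hψH w hw))).hasDerivAt.comp w (hψd w hw)
  have hi : InjOn (φ ∘ ψ) (Metric.ball 0 1) := by
    intro w hw v hv h
    have h2 := hinj (hψH w hw) (hψH v hv) h
    simp only [ψ] at h2
    have h3 := mul_left_cancel₀ (mul_ne_zero two_ne_zero hxc) (add_left_cancel h2)
    have h4 := inv_injective h3
    linear_combination -h4
  have hd0 : deriv (φ ∘ ψ) 0 = 2 * x * deriv φ z := by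
    rw [(hfd 0 h0).deriv, hψ0]; simp; ring
  have hdd0 : deriv (deriv (φ ∘ ψ)) 0 = 4 * x * (x * deriv (deriv φ) z + deriv φ z) := by
    have hev : deriv (φ ∘ ψ) =ᶠ[𝓝 0] fun w => deriv φ (ψ w) * (2 * x * ((1 - w) ^ 2)⁻¹) := by
      filter_upwards [Metric.ball_mem_nhds (0:ℂ) one_pos] with w hw
      exact (hfd w hw).deriv
    rw [hev.deriv_eq]
    have h1 : HasDerivAt (fun w => deriv φ (ψ w)) (deriv (deriv φ) (ψ 0) * (2 * x * ((1 - 0) ^ 2)⁻¹)) 0 :=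
      ((hdiff.deriv hHo).differentiableAt (hHo.mem_nhds (hψH 0 h0))).hasDerivAt.comp 0 (hψd 0 h0)
    have h2 := ((((hasDerivAt_id (0:ℂ)).const_sub 1).pow 2).inv (by simp)).const_mul (2 * (x:ℂ))
    have h3 : deriv (fun w => deriv φ (ψ w) * (2 * x * ((1 - w) ^ 2)⁻¹)) 0 = _ := (h1.mul h2).deriv
    rw [h3, hψ0]
    simp
    ring
  have hB := bieberbach (φ ∘ ψ) (fun w hw => (hfd w hw).differentiableAt.differentiableWithinAt) hi
    (by rw [hd0]; exact mul_ne_zero (mul_ne_zero two_ne_zero hxc) hne)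
  rw [hd0, hdd0, norm_mul, norm_mul _ (deriv φ z)] at hB
  simp [abs_of_pos hz] at hB
  have : (4 * x) * ‖x * deriv (deriv φ) z + deriv φ z‖ ≤ (4 * x) * (2 * ‖deriv φ z‖) := by linarith
  exact le_of_mul_le_mul_left this (by positivity)

open Set Filter Topology in
lemma halfplane_all (φ : ℂ → ℂ) (hdiff : DifferentiableOn ℂ φ {z : ℂ | 0 < z.re})
    (hinj : InjOn φ {z : ℂ | 0 < z.re}) (z : ℂ) (hz : 0 < z.re) :
    ‖z.re * deriv (deriv φ) z + deriv φ z‖ ≤ 2 * ‖deriv φ z‖ := by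
  have hHo : IsOpen {z : ℂ | 0 < z.re} := isOpen_lt continuous_const continuous_re
  have hHn : {z : ℂ | 0 < z.re} ∈ 𝓝 z := hHo.mem_nhds hz
  have hd1 := hdiff.deriv hHo
  have hd2 := hd1.deriv hHo
  rcases (hd1.analyticAt hHn).eventually_eq_zero_or_eventually_ne_zero with h | h
  · exfalso
    obtain ⟨ε, hε, hb⟩ := Metric.eventually_nhds_iff_ball.1 (h.and hHn)
    have hzb : z ∈ Metric.ball z ε := Metric.mem_ball_self hε
    have hwb : z + (ε / 2 : ℝ) ∈ Metric.ball z ε := by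
      simp [abs_of_pos hε]; linarith
    have := Metric.isOpen_ball.is_const_of_deriv_eq_zero (convex_ball z ε).isPreconnected
      (hdiff.mono fun w hw => (hb w hw).2) (fun w hw => (hb w hw).1) hwb hzb
    have h2 := hinj (hb _ hwb).2 (hb _ hzb).2 this
    simp at h2
    exact hε.ne' h2
  · have c1 : ContinuousAt (deriv φ) z := hd1.continuousOn.continuousAt hHn
    have c2 : ContinuousAt (deriv (deriv φ)) z := hd2.continuousOn.continuousAt hHn
    have c3 : ContinuousAt (fun w : ℂ => (w.re : ℂ)) z := by fun_prop
    have t1 : Tendsto (fun w : ℂ => ‖w.re * deriv (deriv φ) w + deriv φ w‖) (𝓝[≠] z)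
        (𝓝 ‖z.re * deriv (deriv φ) z + deriv φ z‖) :=
      (((c3.mul c2).add c1).norm).tendsto.mono_left nhdsWithin_le_nhds
    have t2 : Tendsto (fun w : ℂ => 2 * ‖deriv φ w‖) (𝓝[≠] z) (𝓝 (2 * ‖deriv φ z‖)) :=
      (c1.norm.const_mul 2).tendsto.mono_left nhdsWithin_le_nhds
    refine le_of_tendsto_of_tendsto t1 t2 ?_
    filter_upwards [h, nhdsWithin_le_nhds hHn] with w h1 h2
    exact halfplane_ne φ hdiff hinj w h2 h1

open Set Filter Topology in
lemma distortion (φ : ℂ → ℂ) (hdiff : DifferentiableOn ℂ φ {z : ℂ | 0 < z.re})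
    (hinj : InjOn φ {z : ℂ | 0 < z.re}) (x : ℝ) (hx : 1 < x) (y : ℝ) :
    ‖deriv φ ((1:ℂ) + y * I)‖ ≤ x ^ 3 * ‖deriv φ ((x:ℂ) + y * I)‖ ∧
    ‖deriv φ ((x:ℂ) + y * I)‖ ≤ x * ‖deriv φ ((1:ℂ) + y * I)‖ := by
  have hHo : IsOpen {z : ℂ | 0 < z.re} := isOpen_lt continuous_const continuous_re
  have hd1 := hdiff.deriv hHo
  let z : ℝ → ℂ := fun s => (s:ℂ) + y * I
  have hzre : ∀ s, (z s).re = s := by intro s; simp [z]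
  have hzd : ∀ s, HasDerivAt z 1 s := fun s => 
    (Complex.ofRealCLM.hasDerivAt (x := s)).add_const _
  let F : ℝ → ℂ := fun s => deriv φ (z s)
  have hF : ∀ s, 0 < s → HasDerivAt F (deriv (deriv φ) (z s)) s := by
    intro s hs
    have h1 : HasDerivAt (deriv φ) (deriv (deriv φ) (z s)) (z s) :=
      (hd1.differentiableAt (hHo.mem_nhds (by show 0 < (z s).re; rw [hzre]; exact hs))).hasDerivAt
    have := h1.comp s (hzd s)
    rw [mul_one] at this
    exact this
  let v : ℝ → ℝ := fun s => (F s).re ^ 2 + (F s).im ^ 2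
  let dv : ℝ → ℝ := fun s => 2 * (F s).re * (deriv (deriv φ) (z s)).re + 2 * (F s).im * (deriv (deriv φ) (z s)).im
  have hv : ∀ s, 0 < s → HasDerivAt v (dv s) s := by
    intro s hs
    have h1 : HasDerivAt (fun s => (F s).re) _ s := Complex.reCLM.hasFDerivAt.comp_hasDerivAt s (hF s hs)
    have h2 : HasDerivAt (fun s => (F s).im) _ s := Complex.imCLM.hasFDerivAt.comp_hasDerivAt s (hF s hs)
    refine ((h1.pow 2).add (h2.pow 2)).congr_deriv ?_
    simp [dv]
  have hvn : ∀ s, v s = ‖F s‖ ^ 2 := by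
    intro s; rw [← Complex.normSq_eq_norm_sq, Complex.normSq_apply]; simp only [v]; ring
  have hbd : ∀ s, 0 < s → -6 * v s ≤ s * dv s ∧ s * dv s ≤ 2 * v s := by
    intro s hs
    have h := halfplane_all φ hdiff hinj (z s) (by rw [hzre]; exact hs)
    rw [hzre] at h
    set q := deriv (deriv φ) (z s) with hq
    have hre : |((starRingEnd ℂ) (F s) * (s * q + F s)).re| ≤ 2 * v s := by
      refine (Complex.abs_re_le_norm _).trans ?_
      rw [norm_mul, RCLike.norm_conj, hvn]
      calc ‖F s‖ * ‖s * q + F s‖ ≤ ‖F s‖ * (2 * ‖F s‖) := by gcongr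
        _ = _ := by ring
    have he : ((starRingEnd ℂ) (F s) * (s * q + F s)).re = s * dv s / 2 + v s := by
      simp [v, dv]; ring
    rw [he, abs_le] at hre
    constructor <;> linarith [hre.1, hre.2]
  have hpos : ∀ s ∈ Icc 1 x, 0 < s := fun s hs => lt_of_lt_of_le one_pos hs.1
  have hpos' : ∀ s ∈ interior (Icc 1 x), 0 < s := fun s hs => hpos s (interior_subset hs)
  have m1 : MonotoneOn (fun s => s ^ 6 * v s) (Icc 1 x) := by
    have hder : ∀ s, 0 < s → HasDerivAt (fun s => s ^ 6 * v s) (6 * s ^ 5 * v s + s ^ 6 * dv s) s := by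
      intro s hs
      refine ((hasDerivAt_pow 6 s).mul (hv s hs)).congr_deriv ?_
      norm_num
    refine monotoneOn_of_deriv_nonneg (convex_Icc _ _)
      (fun s hs => (hder s (hpos s hs)).continuousAt.continuousWithinAt)
      (fun s hs => (hder s (hpos' s hs)).differentiableAt.differentiableWithinAt) ?_
    intro s hs
    have h0 := hpos' s hs
    rw [(hder s h0).deriv]
    have : 6 * s ^ 5 * v s + s ^ 6 * dv s = s ^ 5 * (s * dv s - -6 * v s) := by ring
    rw [this]
    exact mul_nonneg (by positivity) (by linarith [(hbd s h0).1])
  have m2 : AntitoneOn (fun s => (s ^ 2)⁻¹ * v s) (Icc 1 x) := by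
    have hder : ∀ s, 0 < s → HasDerivAt (fun s => (s ^ 2)⁻¹ * v s) ((s ^ 3)⁻¹ * (s * dv s - 2 * v s)) s := by
      intro s hs
      refine (((hasDerivAt_pow 2 s).inv (by positivity)).mul (hv s hs)).congr_deriv ?_
      simp
      field_simp
      ring
    refine antitoneOn_of_deriv_nonpos (convex_Icc _ _)
      (fun s hs => (hder s (hpos s hs)).continuousAt.continuousWithinAt)
      (fun s hs => (hder s (hpos' s hs)).differentiableAt.differentiableWithinAt) ?_
    intro s hs
    have h0 := hpos' s hs
    rw [(hder s h0).deriv]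
    exact mul_nonpos_of_nonneg_of_nonpos (by positivity) (by linarith [(hbd s h0).2])
  have e1 := m1 (left_mem_Icc.2 hx.le) (right_mem_Icc.2 hx.le) hx.le
  have e2 := m2 (left_mem_Icc.2 hx.le) (right_mem_Icc.2 hx.le) hx.le
  simp only [hvn] at e1 e2
  have hF1 : F 1 = deriv φ ((1:ℂ) + y * I) := by simp [F, z]
  have hFx : F x = deriv φ ((x:ℂ) + y * I) := by simp [F, z]
  rw [hF1, hFx] at e1 e2
  have hx0 : 0 < x := by linarith
  constructor
  · apply le_of_sq_le_sq_aux (by positivity)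
    nlinarith [e1]
  · apply le_of_sq_le_sq_aux (by positivity)
    rw [inv_mul_le_iff₀ (by positivity)] at e2
    nlinarith [e2]


/-- Lemma 3.1 of the paper: comparison of integral means of `|φ'|^t` over vertical
segments on the lines `Re z = x` and `Re z = 1`. -/
theorem integral_means_comparison (φ : ℂ → ℂ)
    (hdiff : DifferentiableOn ℂ φ {z : ℂ | 0 < z.re})
    (hinj : Set.InjOn φ {z : ℂ | 0 < z.re}) :
    ∀ x : ℝ, 1 < x → ∀ t : ℝ, 0 ≤ t → ∀ κ : ℝ, κ ∈ Set.Ioo (0 : ℝ) 1 →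
      ∀ T : ℝ, 1 ≤ T →
      (2 : ℝ) ^ (-t) * x ^ (-(3 * t)) *
          (∫ y in (κ * T)..T, ‖deriv φ ((1 : ℂ) + (y : ℂ) * Complex.I)‖ ^ t)
        ≤ (∫ y in (κ * T)..T, ‖deriv φ ((x : ℂ) + (y : ℂ) * Complex.I)‖ ^ t) ∧
      (∫ y in (κ * T)..T, ‖deriv φ ((x : ℂ) + (y : ℂ) * Complex.I)‖ ^ t)
        ≤ (8 : ℝ) ^ t * x ^ t *
          (∫ y in (κ * T)..T, ‖deriv φ ((1 : ℂ) + (y : ℂ) * Complex.I)‖ ^ t) := by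
  have hHo : IsOpen {z : ℂ | 0 < z.re} := isOpen_lt continuous_const continuous_re
  have hd1 := hdiff.deriv hHo
  intro x hx t ht κ hκ T hT
  have hx0 : 0 < x := by linarith
  have hle : κ * T ≤ T := by nlinarith [hκ.2]
  have hint : ∀ s : ℝ, 0 < s → IntervalIntegrable
      (fun y : ℝ => ‖deriv φ ((s : ℂ) + (y : ℂ) * Complex.I)‖ ^ t) MeasureTheory.volume (κ * T) T := by
    intro s hs
    apply Continuous.intervalIntegrable
    apply Continuous.rpow_const _ (fun _ => Or.inr ht)
    apply Continuous.norm
    apply hd1.continuousOn.comp_continuous (by fun_prop)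
    intro y
    simpa using hs
  have h1 := hint 1 one_pos
  rw [Complex.ofReal_one] at h1
  have hxx := hint x hx0
  constructor
  · rw [← intervalIntegral.integral_const_mul]
    apply intervalIntegral.integral_mono_on hle (h1.const_mul _) hxx
    intro y _
    have hd := (distortion φ hdiff hinj x hx y).1
    set A := ‖deriv φ ((1 : ℂ) + (y : ℂ) * Complex.I)‖ with hA
    set B := ‖deriv φ ((x : ℂ) + (y : ℂ) * Complex.I)‖ with hB
    have hA0 : 0 ≤ A := norm_nonneg _
    have hB0 : 0 ≤ B := norm_nonneg _
    have e1 : x ^ (-(3 * t)) = ((x ^ 3)⁻¹) ^ t := by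
      rw [Real.inv_rpow (by positivity), ← Real.rpow_natCast x 3, ← Real.rpow_mul hx0.le,
        Real.rpow_neg hx0.le]
      norm_num
    have e2 : (2:ℝ) ^ (-t) ≤ 1 := Real.rpow_le_one_of_one_le_of_nonpos (by norm_num) (by linarith)
    calc (2:ℝ) ^ (-t) * x ^ (-(3 * t)) * A ^ t ≤ 1 * x ^ (-(3 * t)) * A ^ t := by gcongr
      _ = ((x ^ 3)⁻¹ * A) ^ t := by rw [one_mul, e1, Real.mul_rpow (by positivity) hA0]
      _ ≤ B ^ t := by
        apply Real.rpow_le_rpow (by positivity) _ ht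
        rw [inv_mul_le_iff₀ (by positivity)]
        exact hd
  · rw [← intervalIntegral.integral_const_mul]
    apply intervalIntegral.integral_mono_on hle hxx (h1.const_mul _)
    intro y _
    have hd := (distortion φ hdiff hinj x hx y).2
    set A := ‖deriv φ ((1 : ℂ) + (y : ℂ) * Complex.I)‖ with hA
    set B := ‖deriv φ ((x : ℂ) + (y : ℂ) * Complex.I)‖ with hB
    have hA0 : 0 ≤ A := norm_nonneg _
    have hB0 : 0 ≤ B := norm_nonneg _
    have e2 : 1 ≤ (8:ℝ) ^ t := Real.one_le_rpow (by norm_num) ht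
    calc B ^ t ≤ (x * A) ^ t := Real.rpow_le_rpow hB0 hd ht
      _ = 1 * x ^ t * A ^ t := by rw [one_mul, Real.mul_rpow hx0.le hA0]
      _ ≤ _ := by gcongr
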